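/- For ℓ = 2 (centers are line segments): for every Q ∈ X^d_2 there exist indices 1 ≤ i < j ≤ m such that r_Q ⊆ r_{i,j}, where r_Q ∈ R and r_{i,j} ∈ R̃_2. Consequently, if there exists a set cover of R of size k, then there exists a set cover of R̃_2 of size at most k. -/

import Mathlib

/-!
The set `r_Q` is empty or contains some element, witnessed by a subcurve `P[t_i, t_j]` within
Fréchet distance `Δ` of the segment `Q`; in the second case this pair `(i, j)` works for all of
`r_Q`.

Let `z ∈ r_Q` be witnessed by `P[t_x, t_y]`, and fix a near-optimal matching of this subcurve with
`Q`. The points of `Q` matched to the parameters `t_x ≤ t_z < t_{z+1} ≤ t_y` occur in this order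
along `Q`, each almost within `Δ` of its partner, and `Q` is pointwise within `Δ` of `τ_{i,j}`
because the endpoints are. So the vertices of `π(x, z, z+1, y)` are almost within `2Δ` of points
occurring in order along `τ_{i,j}`, and interpolating linearly gives `d_F(π, τ_{i,j}) ≤ 2Δ`.

For the conditions `x_z ≤ x` and `y ≤ y_z`, a subcurve of `P[t_x, t_y]` is almost within `Δ` of the
matched subsegment of `Q`, which in turn is almost within `Δ` of the segment joining the endpoints
of that subcurve. Hence the segment is within `2Δ ≤ 4Δ` of the subcurve.

Reparametrizations are strictly increasing, so a matching that degenerates (for instance if `x = z`)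
is first perturbed by an arbitrarily small amount.
-/

open Set

noncomputable section

/-- Points in `ℝ^d`. -/
abbrev Pt (d : ℕ) : Type := EuclideanSpace ℝ (Fin d)

/-- A reparametrization: a continuous strictly increasing bijection of `[0,1]` onto itself. -/
def IsReparam (γ : ℝ → ℝ) : Prop :=
  ContinuousOn γ (Icc 0 1) ∧ StrictMonoOn γ (Icc 0 1) ∧ γ '' Icc 0 1 = Icc 0 1

/-- The Fréchet distance `d_F(P,Q) = inf_γ sup_{t ∈ [0,1]} ‖P(γ(t)) - Q(t)‖`
(only the values of the curves on `[0,1]` are relevant). -/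
def frechetDist {d : ℕ} (P Q : ℝ → Pt d) : ℝ :=
  ⨅ γ : {γ : ℝ → ℝ // IsReparam γ}, ⨆ s : Icc (0:ℝ) 1, ‖P (γ.1 s.1) - Q s.1‖

/-- The linearly parametrized line segment from `a` to `b`. -/
def seg {d : ℕ} (a b : Pt d) : ℝ → Pt d := fun s => (1 - s) • a + s • b

/-- The subcurve `P[a,b]` of `P`, linearly reparametrized over `[0,1]`. -/
def subcurve {d : ℕ} (P : ℝ → Pt d) (a b : ℝ) : ℝ → Pt d := fun s => P (a + s * (b - a))

/-- The polygonal curve with vertex sequence `pts 0, …, pts n`, uniformly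
parametrized over `[0,1]`. -/
def polyline {d n : ℕ} (pts : Fin (n + 1) → Pt d) : ℝ → Pt d := fun s =>
  if h : n = 0 then pts 0
  else
    let i : ℕ := min ⌊s * n⌋₊ (n - 1)
    have hi : i < n := lt_of_le_of_lt (min_le_right _ _) (by omega)
    (1 - (s * n - i)) • pts ⟨i, hi.trans n.lt_succ_self⟩ +
      (s * n - i) • pts ⟨i + 1, Nat.succ_lt_succ hi⟩

/-- `f ∈ 𝕏^d_ℓ`: `f` is a polygonal curve with at most `ℓ` vertices. -/
def IsPolygonal {d : ℕ} (f : ℝ → Pt d) (ℓ : ℕ) : Prop :=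
  ∃ n : ℕ, n + 1 ≤ ℓ ∧ ∃ pts : Fin (n + 1) → Pt d, f = polyline pts

/-- Concatenation of two curves (each parametrized over `[0,1]`). -/
def concat {d : ℕ} (f g : ℝ → Pt d) : ℝ → Pt d := fun s =>
  if s ≤ 1 / 2 then f (2 * s) else g (2 * s - 1)

/-- `CostLE P m t C Δ` states that the clustering cost satisfies `φ(P,C) ≤ Δ`:
there is a family `I` of index pairs `(i,j)`, `1 ≤ i < j ≤ m`, with
`⋃_{(i,j) ∈ I} [t i, t j] = [0,1]`, such that every corresponding subcurve is
within Fréchet distance `Δ` of some center in `C`. -/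
def CostLE {d : ℕ} (P : ℝ → Pt d) (m : ℕ) (t : ℕ → ℝ) (C : Set (ℝ → Pt d)) (Δ : ℝ) : Prop :=
  ∃ I : Set (ℕ × ℕ),
    (∀ q ∈ I, 1 ≤ q.1 ∧ q.1 < q.2 ∧ q.2 ≤ m) ∧
    (⋃ q ∈ I, Icc (t q.1) (t q.2)) = Icc (0:ℝ) 1 ∧
    ∀ q ∈ I, ∃ c ∈ C, frechetDist (subcurve P (t q.1) (t q.2)) c ≤ Δ

/-- The set `r_Q` of the set system `R` (ground set `{1,…,m−1}`):
`r_Q = {z : ∃ i ≤ z < j, d_F(Q, P[t_i,t_j]) ≤ Δ}`. -/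
def rSet {d : ℕ} (P : ℝ → Pt d) (m : ℕ) (t : ℕ → ℝ) (Δ : ℝ) (Q : ℝ → Pt d) : Set ℕ :=
  {z | 1 ≤ z ∧ z < m ∧ ∃ i j, 1 ≤ i ∧ i ≤ z ∧ z < j ∧ j ≤ m ∧
    frechetDist Q (subcurve P (t i) (t j)) ≤ Δ}

/-- The set `r_{i,j}` of the set system `R̃₂` (case `ℓ = 2`). -/
def rTilde2 {d : ℕ} (P : ℝ → Pt d) (m : ℕ) (t : ℕ → ℝ) (Δ : ℝ)
    (xz yz : ℕ → ℕ) (i j : ℕ) : Set ℕ :=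
  {z | 1 ≤ z ∧ z < m ∧ ∃ x y, xz z ≤ x ∧ x ≤ z ∧ z + 1 ≤ y ∧ y ≤ yz z ∧
    frechetDist (polyline (n := 3) ![P (t x), P (t z), P (t (z+1)), P (t y)])
      (seg (P (t i)) (P (t j))) ≤ 2 * Δ}

/-! ### Reparametrizations -/

namespace IsReparam

variable {γ δ : ℝ → ℝ}

lemma of_endpoints (hcont : ContinuousOn γ (Icc 0 1)) (hmono : StrictMonoOn γ (Icc 0 1))
    (h0 : γ 0 = 0) (h1 : γ 1 = 1) : IsReparam γ := by
  refine ⟨hcont, hmono, Subset.antisymm ?_ ?_⟩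
  · simpa only [h0, h1] using hmono.monotoneOn.image_Icc_subset
  · simpa only [h0, h1] using intermediate_value_Icc zero_le_one hcont

protected lemma id : IsReparam id :=
  .of_endpoints continuousOn_id (strictMono_id.strictMonoOn _) rfl rfl

lemma mapsTo (hγ : IsReparam γ) : MapsTo γ (Icc 0 1) (Icc 0 1) :=
  mapsTo_iff_image_subset.2 hγ.2.2.subset

lemma map_zero (hγ : IsReparam γ) : γ 0 = 0 := by
  have h0 : (0 : ℝ) ∈ Icc (0 : ℝ) 1 := left_mem_Icc.2 zero_le_one
  obtain ⟨s, hs, hs0⟩ := hγ.2.2.superset h0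
  exact le_antisymm ((hγ.2.1.monotoneOn h0 hs hs.1).trans_eq hs0) (hγ.mapsTo h0).1

lemma map_one (hγ : IsReparam γ) : γ 1 = 1 := by
  have h1 : (1 : ℝ) ∈ Icc (0 : ℝ) 1 := right_mem_Icc.2 zero_le_one
  obtain ⟨s, hs, hs1⟩ := hγ.2.2.superset h1
  exact le_antisymm (hγ.mapsTo h1).2 (hs1.symm.trans_le (hγ.2.1.monotoneOn hs h1 hs.2))

lemma comp (hγ : IsReparam γ) (hδ : IsReparam δ) : IsReparam (γ ∘ δ) :=
  ⟨hγ.1.comp hδ.1 hδ.mapsTo, hγ.2.1.comp hδ.2.1 hδ.mapsTo, by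
    rw [image_comp, hδ.2.2, hγ.2.2]⟩

lemma exists_rightInvOn (hγ : IsReparam γ) :
    ∃ δ, IsReparam δ ∧ RightInvOn δ γ (Icc 0 1) := by
  let e : Icc (0 : ℝ) 1 ≃o Icc (0 : ℝ) 1 :=
    (hγ.2.1.orderIso γ (Icc 0 1)).trans (OrderIso.setCongr _ _ hγ.2.2)
  let δ : ℝ → ℝ := IccExtend zero_le_one fun s => (e.symm s : ℝ)
  have hδ : ∀ s : Icc (0 : ℝ) 1, δ s = e.symm s := fun s => IccExtend_val _ _ s
  refine ⟨δ, ⟨?_, ?_, ?_⟩, fun s hs => ?_⟩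
  · exact (continuous_subtype_val.comp e.symm.continuous).Icc_extend'.continuousOn
  · intro s hs s' hs' hlt
    rw [hδ ⟨s, hs⟩, hδ ⟨s', hs'⟩]
    exact e.symm.strictMono hlt
  · refine Subset.antisymm ?_ fun s hs => ⟨e ⟨s, hs⟩, (e ⟨s, hs⟩).2, ?_⟩
    · rintro _ ⟨s, hs, rfl⟩
      exact hδ ⟨s, hs⟩ ▸ (e.symm ⟨s, hs⟩).2
    · rw [hδ, e.symm_apply_apply]
  · rw [hδ ⟨s, hs⟩]
    exact congrArg Subtype.val (e.apply_symm_apply ⟨s, hs⟩)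

end IsReparam

/-! ### The Fréchet distance -/

section frechetDist

variable {d : ℕ} {f g h : ℝ → Pt d} {γ : ℝ → ℝ} {c : ℝ}

lemma frechetDist_le (hγ : IsReparam γ) (hfg : ∀ s ∈ Icc (0 : ℝ) 1, ‖f (γ s) - g s‖ ≤ c) :
    frechetDist f g ≤ c := by
  have hbdd : BddBelow (range fun γ : {γ : ℝ → ℝ // IsReparam γ} =>
      ⨆ s : Icc (0 : ℝ) 1, ‖f (γ.1 s.1) - g s.1‖) :=
    ⟨0, forall_mem_range.2 fun _ => Real.iSup_nonneg fun _ => norm_nonneg _⟩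
  have : Nonempty (Icc (0 : ℝ) 1) := nonempty_Icc_subtype zero_le_one
  exact (ciInf_le hbdd ⟨γ, hγ⟩).trans (ciSup_le fun s => hfg s.1 s.2)

lemma frechetDist_le_of_norm_sub_le (hfg : ∀ s ∈ Icc (0 : ℝ) 1, ‖f s - g s‖ ≤ c) :
    frechetDist f g ≤ c :=
  frechetDist_le .id hfg

lemma frechetDist_le_of_reparam_right (hγ : IsReparam γ)
    (hfg : ∀ s ∈ Icc (0 : ℝ) 1, ‖f s - g (γ s)‖ ≤ c) : frechetDist f g ≤ c := by
  obtain ⟨δ, hδ, hγδ⟩ := hγ.exists_rightInvOn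
  refine frechetDist_le hδ fun s hs => ?_
  simpa only [hγδ hs] using hfg (δ s) (hδ.mapsTo hs)

/-- Continuity bounds the supremum over `[0,1]`, so a small value of `frechetDist` is not the junk
value of an unbounded supremum. -/
lemma exists_isReparam_of_frechetDist_lt (hf : ContinuousOn f (Icc 0 1))
    (hg : ContinuousOn g (Icc 0 1)) (hfg : frechetDist f g < c) :
    ∃ γ, IsReparam γ ∧ ∀ s ∈ Icc (0 : ℝ) 1, ‖f (γ s) - g s‖ ≤ c := by
  have : Nonempty {γ : ℝ → ℝ // IsReparam γ} := ⟨⟨id, .id⟩⟩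
  obtain ⟨⟨γ, hγ⟩, hlt⟩ := exists_lt_of_ciInf_lt hfg
  have hbdd : BddAbove (range fun s : Icc (0 : ℝ) 1 => ‖f (γ s) - g s‖) := by
    have hcont : ContinuousOn (fun s => ‖f (γ s) - g s‖) (Icc 0 1) :=
      ((hf.comp hγ.1 hγ.mapsTo).sub hg).norm
    simpa only [image_eq_range] using isCompact_Icc.bddAbove_image hcont
  exact ⟨γ, hγ, fun s hs => (le_ciSup hbdd ⟨s, hs⟩).trans hlt.le⟩

lemma norm_apply_zero_sub_le_frechetDist (hf : ContinuousOn f (Icc 0 1))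
    (hg : ContinuousOn g (Icc 0 1)) : ‖f 0 - g 0‖ ≤ frechetDist f g := by
  refine le_of_forall_gt_imp_ge_of_dense fun c hc => ?_
  obtain ⟨γ, hγ, hfg⟩ := exists_isReparam_of_frechetDist_lt hf hg hc
  simpa only [hγ.map_zero] using hfg 0 (left_mem_Icc.2 zero_le_one)

lemma norm_apply_one_sub_le_frechetDist (hf : ContinuousOn f (Icc 0 1))
    (hg : ContinuousOn g (Icc 0 1)) : ‖f 1 - g 1‖ ≤ frechetDist f g := by
  refine le_of_forall_gt_imp_ge_of_dense fun c hc => ?_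
  obtain ⟨γ, hγ, hfg⟩ := exists_isReparam_of_frechetDist_lt hf hg hc
  simpa only [hγ.map_one] using hfg 1 (right_mem_Icc.2 zero_le_one)

lemma frechetDist_triangle (hf : ContinuousOn f (Icc 0 1)) (hg : ContinuousOn g (Icc 0 1))
    (hh : ContinuousOn h (Icc 0 1)) :
    frechetDist f h ≤ frechetDist f g + frechetDist g h := by
  refine le_of_forall_pos_le_add fun ε hε => ?_
  obtain ⟨γ, hγ, hfg⟩ := exists_isReparam_of_frechetDist_lt hf hg
    (lt_add_of_pos_right (frechetDist f g) (half_pos hε))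
  obtain ⟨δ, hδ, hgh⟩ := exists_isReparam_of_frechetDist_lt hg hh
    (lt_add_of_pos_right (frechetDist g h) (half_pos hε))
  refine frechetDist_le (hγ.comp hδ) fun s hs => ?_
  calc ‖f (γ (δ s)) - h s‖
      ≤ ‖f (γ (δ s)) - g (δ s)‖ + ‖g (δ s) - h s‖ := norm_sub_le_norm_sub_add_norm_sub _ _ _
    _ ≤ (frechetDist f g + ε / 2) + (frechetDist g h + ε / 2) :=
        add_le_add (hfg _ (hδ.mapsTo hs)) (hgh s hs)
    _ = frechetDist f g + frechetDist g h + ε := by ring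

/-- Mixing a little of the identity into `β` makes it strictly increasing, and moves the points of
the uniformly continuous curve `g` by arbitrarily little. -/
lemma frechetDist_le_of_monotoneOn {β : ℝ → ℝ} (hg : ContinuousOn g (Icc 0 1))
    (hβ : ContinuousOn β (Icc 0 1)) (hmono : MonotoneOn β (Icc 0 1)) (h0 : β 0 = 0) (h1 : β 1 = 1)
    (hfg : ∀ s ∈ Icc (0 : ℝ) 1, ‖f s - g (β s)‖ ≤ c) : frechetDist f g ≤ c := by
  refine le_of_forall_pos_le_add fun ε hε => ?_
  obtain ⟨η, hη, hgη⟩ := Metric.uniformContinuousOn_iff_le.1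
    (isCompact_Icc.uniformContinuousOn_of_continuous hg) ε hε
  obtain ⟨θ, hθ0, hθ⟩ := exists_between (lt_min hη one_pos)
  obtain ⟨hθη, hθ1⟩ := lt_min_iff.1 hθ
  let β' : ℝ → ℝ := fun s => (1 - θ) * β s + θ * s
  have hβ' : IsReparam β' := by
    refine .of_endpoints (by fun_prop) (fun s hs s' hs' hlt => ?_) (by simp [β', h0])
      (by simp [β', h1])
    exact add_lt_add_of_le_of_lt
      (mul_le_mul_of_nonneg_left (hmono hs hs' hlt.le) (sub_nonneg.2 hθ1.le))
      (mul_lt_mul_of_pos_left hlt hθ0)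
  refine frechetDist_le_of_reparam_right hβ' fun s hs => ?_
  have hβs : β s ∈ Icc (0 : ℝ) 1 := by
    simpa only [h0, h1] using hmono.image_Icc_subset (mem_image_of_mem β hs)
  have hdist : dist (β s) (β' s) ≤ η := by
    have habs : |β s - s| ≤ 1 := by
      rw [abs_le]
      constructor <;> linarith [hs.1, hs.2, hβs.1, hβs.2]
    calc dist (β s) (β' s) = θ * |β s - s| := by
          rw [Real.dist_eq, show β s - β' s = θ * (β s - s) by ring, abs_mul, abs_of_pos hθ0]
      _ ≤ θ := mul_le_of_le_one_right hθ0.le habs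
      _ ≤ η := hθη.le
  calc ‖f s - g (β' s)‖ ≤ ‖f s - g (β s)‖ + ‖g (β s) - g (β' s)‖ :=
        norm_sub_le_norm_sub_add_norm_sub _ _ _
    _ ≤ c + ε := add_le_add (hfg s hs)
        (dist_eq_norm (g (β s)) _ ▸ hgη _ hβs _ (hβ'.mapsTo hs) hdist)

end frechetDist

/-! ### Matchings of subcurves -/

section Matching

variable {d : ℕ} {f g : ℝ → Pt d} {A B x z c : ℝ} {ρ : ℝ → ℝ}

lemma add_mul_sub_mem_Icc {s : ℝ} (hAB : A ≤ B) (hs : s ∈ Icc (0 : ℝ) 1) :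
    A + s * (B - A) ∈ Icc A B := by
  constructor <;> nlinarith [hs.1, hs.2]

lemma continuousOn_subcurve (hg : ContinuousOn g (Icc A B)) (hAB : A ≤ B) :
    ContinuousOn (subcurve g A B) (Icc 0 1) :=
  hg.comp (by fun_prop) fun _ hs => add_mul_sub_mem_Icc hAB hs

lemma subcurve_zero (g : ℝ → Pt d) (A B : ℝ) : subcurve g A B 0 = g A := by
  simp [subcurve]

lemma subcurve_one (g : ℝ → Pt d) (A B : ℝ) : subcurve g A B 1 = g B := by
  simp [subcurve]

/-- `ρ` matches the points of `g` on `[A,B]`, in their order, to points of `f` at distance at most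
`c`. Unlike a reparametrization, it is indexed by the parameter of `g` itself, so that it can be
restricted to subintervals. -/
structure IsMatching (f g : ℝ → Pt d) (A B : ℝ) (ρ : ℝ → ℝ) (c : ℝ) : Prop where
  continuousOn : ContinuousOn ρ (Icc A B)
  strictMonoOn : StrictMonoOn ρ (Icc A B)
  norm_sub_le : ∀ w ∈ Icc A B, ‖f (ρ w) - g w‖ ≤ c

lemma exists_isMatching_of_frechetDist_lt (hf : ContinuousOn f (Icc 0 1))
    (hg : ContinuousOn g (Icc A B)) (hAB : A < B) (hfg : frechetDist f (subcurve g A B) < c) :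
    ∃ ρ, IsMatching f g A B ρ c ∧ ρ A = 0 ∧ ρ B = 1 := by
  obtain ⟨γ, hγ, hdist⟩ :=
    exists_isReparam_of_frechetDist_lt hf (continuousOn_subcurve hg hAB.le) hfg
  have hpos : 0 < B - A := sub_pos.2 hAB
  let σ : ℝ → ℝ := fun w => (w - A) / (B - A)
  have hσ : MapsTo σ (Icc A B) (Icc 0 1) := fun w hw =>
    ⟨div_nonneg (sub_nonneg.2 hw.1) hpos.le,
      (div_le_one hpos).2 (sub_le_sub_right hw.2 A)⟩
  have hσmono : StrictMono σ := fun w w' hlt =>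
    div_lt_div_of_pos_right (sub_lt_sub_right hlt A) hpos
  refine ⟨γ ∘ σ, ⟨hγ.1.comp (by fun_prop) hσ, hγ.2.1.comp (hσmono.strictMonoOn _) hσ,
    fun w hw => ?_⟩, ?_, ?_⟩
  · have hw' : A + σ w * (B - A) = w := by
      rw [div_mul_cancel₀ _ hpos.ne', add_sub_cancel]
    simpa only [Function.comp_apply, subcurve, hw'] using hdist (σ w) (hσ hw)
  · simp [σ, hγ.map_zero]
  · simp [σ, hpos.ne', hγ.map_one]

namespace IsMatching

lemma mono (hρ : IsMatching f g A B ρ c) (hAx : A ≤ x) (hzB : z ≤ B) :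
    IsMatching f g x z ρ c :=
  have hsub : Icc x z ⊆ Icc A B := Icc_subset_Icc hAx hzB
  ⟨hρ.continuousOn.mono hsub, hρ.strictMonoOn.mono hsub, fun w hw => hρ.norm_sub_le w (hsub hw)⟩

lemma frechetDist_subcurve_le (hρ : IsMatching f g x z ρ c) (hxz : x ≤ z) :
    frechetDist (subcurve f (ρ x) (ρ z)) (subcurve g x z) ≤ c := by
  rcases hxz.eq_or_lt with rfl | hlt
  · exact frechetDist_le_of_norm_sub_le fun s _ => by
      simpa [subcurve] using hρ.norm_sub_le x (left_mem_Icc.2 le_rfl)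
  have hpos : 0 < ρ z - ρ x :=
    sub_pos.2 (hρ.strictMonoOn (left_mem_Icc.2 hxz) (right_mem_Icc.2 hxz) hlt)
  have hmem : MapsTo (fun s => x + s * (z - x)) (Icc 0 1) (Icc x z) :=
    fun s hs => add_mul_sub_mem_Icc hxz hs
  let γ : ℝ → ℝ := fun s => (ρ (x + s * (z - x)) - ρ x) / (ρ z - ρ x)
  have hγ : IsReparam γ := by
    have hcont : ContinuousOn γ (Icc 0 1) :=
      ((hρ.continuousOn.comp (by fun_prop) hmem).sub continuousOn_const).div_const _
    refine .of_endpoints hcont (fun s hs s' hs' hss' => ?_) (by simp [γ])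
      (by simp [γ, hpos.ne'])
    refine div_lt_div_of_pos_right (sub_lt_sub_right ?_ _) hpos
    refine hρ.strictMonoOn (hmem hs) (hmem hs') ?_
    exact add_lt_add_right (mul_lt_mul_of_pos_right hss' (sub_pos.2 hlt)) x
  refine frechetDist_le hγ fun s hs => ?_
  have hγs : ρ x + γ s * (ρ z - ρ x) = ρ (x + s * (z - x)) := by
    rw [div_mul_cancel₀ _ hpos.ne', add_sub_cancel]
  simpa only [subcurve, hγs] using hρ.norm_sub_le _ (hmem hs)

end IsMatching

end Matching

/-! ### Segments -/

section seg

variable {d : ℕ} {a b a' b' : Pt d} {c s : ℝ}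

lemma continuous_seg (a b : Pt d) : Continuous (seg a b) := by
  unfold seg
  fun_prop

lemma seg_zero (a b : Pt d) : seg a b 0 = a := by
  simp [seg]

lemma seg_one (a b : Pt d) : seg a b 1 = b := by
  simp [seg]

lemma subcurve_seg (a b : Pt d) (p q : ℝ) :
    subcurve (seg a b) p q = seg (seg a b p) (seg a b q) := by
  funext s
  unfold subcurve seg
  module

lemma norm_seg_sub_seg_le (hs : s ∈ Icc (0 : ℝ) 1) (ha : ‖a - a'‖ ≤ c) (hb : ‖b - b'‖ ≤ c) :
    ‖seg a b s - seg a' b' s‖ ≤ c := by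
  have hsub : seg a b s - seg a' b' s = (1 - s) • (a - a') + s • (b - b') := by
    unfold seg
    module
  rw [hsub, ← mem_closedBall_zero_iff]
  exact convex_closedBall 0 c (mem_closedBall_zero_iff.2 ha) (mem_closedBall_zero_iff.2 hb)
    (sub_nonneg.2 hs.2) hs.1 (sub_add_cancel 1 s)

lemma frechetDist_seg_seg_le (ha : ‖a - a'‖ ≤ c) (hb : ‖b - b'‖ ≤ c) :
    frechetDist (seg a b) (seg a' b') ≤ c :=
  frechetDist_le_of_norm_sub_le fun _ hs => norm_seg_sub_seg_le hs ha hb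

lemma IsPolygonal.exists_eq_seg {Q : ℝ → Pt d} (hQ : IsPolygonal Q 2) :
    ∃ a b, Q = seg a b := by
  obtain ⟨n, hn, pts, rfl⟩ := hQ
  obtain rfl | rfl : n = 0 ∨ n = 1 := by omega
  · refine ⟨pts 0, pts 0, funext fun s => ?_⟩
    simp only [polyline, seg, dite_true]
    module
  · exact ⟨pts 0, pts 1, funext fun s => by simp [polyline, seg]⟩

end seg

/-! ### Polygonal curves close to a segment -/

/-- The piecewise linear function on `[0,n]` with value `r k` at `k`: the `k`-th summand accounts
for the increment over `[k,k+1]`, so that continuity and monotonicity hold termwise. It serves to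
match a polygonal curve with points of a segment occurring in order. -/
def piecewiseLinear (r : ℕ → ℝ) (n : ℕ) (u : ℝ) : ℝ :=
  r 0 + ∑ k ∈ Finset.range n, (r (k + 1) - r k) * max 0 (min 1 (u - k))

section piecewiseLinear

variable {r : ℕ → ℝ} {n : ℕ}

lemma continuous_piecewiseLinear (r : ℕ → ℝ) (n : ℕ) : Continuous (piecewiseLinear r n) := by
  unfold piecewiseLinear
  fun_prop

lemma monotone_piecewiseLinear (hr : Monotone r) : Monotone (piecewiseLinear r n) := by
  intro u v huv
  unfold piecewiseLinear
  gcongr with k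
  exact sub_nonneg.2 (hr k.le_succ)

lemma piecewiseLinear_natCast_add {k : ℕ} (hk : k < n) {x : ℝ} (hx : x ∈ Icc (0 : ℝ) 1) :
    piecewiseLinear r n (k + x) = r k + x * (r (k + 1) - r k) := by
  have hlow : ∀ j ∈ Finset.range k,
      (r (j + 1) - r j) * max 0 (min 1 (k + x - j)) = r (j + 1) - r j := by
    intro j hj
    have hjk : (j : ℝ) + 1 ≤ k := by exact_mod_cast Finset.mem_range.1 hj
    rw [min_eq_left (by linarith [hx.1]), max_eq_right zero_le_one, mul_one]
  have hhigh : ∀ j ∈ Finset.range n, j ∉ Finset.range (k + 1) →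
      (r (j + 1) - r j) * max 0 (min 1 (k + x - j)) = 0 := by
    intro j _ hj
    have hkj : (k : ℝ) + 1 ≤ j := by
      exact_mod_cast not_lt.1 fun hlt => hj (Finset.mem_range.2 hlt)
    rw [max_eq_left (min_le_of_right_le (by linarith [hx.2])), mul_zero]
  have hmid : max 0 (min 1 (k + x - k)) = x := by
    rw [add_sub_cancel_left, min_eq_right hx.2, max_eq_right hx.1]
  unfold piecewiseLinear
  rw [← Finset.sum_subset (Finset.range_subset_range.2 hk) hhigh, Finset.sum_range_succ,
    Finset.sum_congr rfl hlow, Finset.sum_range_sub, hmid]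
  ring

lemma piecewiseLinear_zero (hn : 0 < n) : piecewiseLinear r n 0 = r 0 := by
  simpa using piecewiseLinear_natCast_add (r := r) hn (left_mem_Icc.2 zero_le_one)

lemma piecewiseLinear_natCast_self (hn : 0 < n) : piecewiseLinear r n n = r n := by
  obtain ⟨k, rfl⟩ := Nat.exists_eq_add_of_lt hn
  simpa using piecewiseLinear_natCast_add (r := r) (Nat.lt_succ_self _)
    (right_mem_Icc.2 zero_le_one)

end piecewiseLinear

section polyline

variable {d n : ℕ} {pts : Fin (n + 1) → Pt d} {c : ℝ}

lemma exists_polyline_eq_seg (pts : Fin (n + 1) → Pt d) (hn : 0 < n) {s : ℝ}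
    (hs : s ∈ Icc (0 : ℝ) 1) :
    ∃ k : Fin n, ∃ x ∈ Icc (0 : ℝ) 1,
      s * n = k + x ∧ polyline pts s = seg (pts k.castSucc) (pts k.succ) x := by
  let k : ℕ := min ⌊s * n⌋₊ (n - 1)
  have hsn : 0 ≤ s * n := mul_nonneg hs.1 n.cast_nonneg
  have hx0 : (k : ℝ) ≤ s * n := (Nat.cast_le.2 (min_le_left _ _)).trans (Nat.floor_le hsn)
  have hx1 : s * n ≤ k + 1 := by
    rcases le_total ⌊s * n⌋₊ (n - 1) with hle | hle
    · simpa only [k, min_eq_left hle] using (Nat.lt_floor_add_one (s * n)).le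
    · rw [← Nat.cast_add_one, show k + 1 = n by omega]
      exact mul_le_of_le_one_left n.cast_nonneg hs.2
  refine ⟨⟨k, by omega⟩, s * n - k, ⟨by linarith, by linarith⟩, by ring, ?_⟩
  simp only [polyline, dif_neg hn.ne']
  rfl

lemma frechetDist_polyline_seg_le {r : Fin (n + 1) → ℝ} {u v : Pt d} (hr : Monotone r)
    (h0 : r 0 = 0) (h1 : r (Fin.last n) = 1) (hdist : ∀ k, ‖pts k - seg u v (r k)‖ ≤ c) :
    frechetDist (polyline pts) (seg u v) ≤ c := by
  have hn : 0 < n := Nat.pos_of_ne_zero fun hn => by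
    subst hn
    exact zero_ne_one (h0.symm.trans h1)
  let r' : ℕ → ℝ := fun k => r (Fin.clamp k n)
  have hr' : ∀ k : Fin (n + 1), r' k = r k := fun k =>
    congrArg r (Fin.ext (min_eq_left k.is_le))
  let β : ℝ → ℝ := fun s => piecewiseLinear r' n (s * n)
  have hβ : Continuous β := (continuous_piecewiseLinear r' n).comp (by fun_prop)
  have hmono : Monotone β :=
    (monotone_piecewiseLinear (hr.comp Fin.clamp_monotone)).comp
      (monotone_mul_right_of_nonneg n.cast_nonneg)
  refine frechetDist_le_of_monotoneOn (continuous_seg u v).continuousOn hβ.continuousOn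
    (hmono.monotoneOn _) ?_ ?_ fun s hs => ?_
  · simp only [β, zero_mul, piecewiseLinear_zero hn]
    exact (hr' 0).trans h0
  · simp only [β, one_mul, piecewiseLinear_natCast_self hn]
    exact (hr' (Fin.last n)).trans h1
  obtain ⟨k, x, hx, hsk, hpoly⟩ := exists_polyline_eq_seg pts hn hs
  have hβs : seg u v (β s) = seg (seg u v (r k.castSucc)) (seg u v (r k.succ)) x := by
    simp only [β, ← subcurve_seg, hsk, piecewiseLinear_natCast_add k.2 hx, subcurve, ← hr',
      Fin.val_castSucc, Fin.val_succ]
  rw [hpoly, hβs]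
  exact norm_seg_sub_seg_le hx (hdist _) (hdist _)

end polyline

/-! ### Simplifying a curve that is close to a segment -/

section simplification

variable {d : ℕ} {P : ℝ → Pt d} {a b : Pt d} {A B : ℝ}

lemma frechetDist_seg_subcurve_le (hP : ContinuousOn P (Icc A B)) (hAB : A < B) {x z : ℝ}
    (hAx : A ≤ x) (hxz : x ≤ z) (hzB : z ≤ B) :
    frechetDist (seg (P x) (P z)) (subcurve P x z) ≤
      2 * frechetDist (seg a b) (subcurve P A B) := by
  refine le_of_forall_pos_le_add fun ε hε => ?_
  obtain ⟨ρ, hρ, -, -⟩ := exists_isMatching_of_frechetDist_lt (continuous_seg a b).continuousOn hP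
    hAB (lt_add_of_pos_right _ (half_pos hε))
  have hends : frechetDist (seg (P x) (P z)) (subcurve (seg a b) (ρ x) (ρ z)) ≤
      frechetDist (seg a b) (subcurve P A B) + ε / 2 := by
    rw [subcurve_seg]
    refine frechetDist_seg_seg_le ?_ ?_ <;> rw [norm_sub_rev]
    · exact hρ.norm_sub_le x ⟨hAx, hxz.trans hzB⟩
    · exact hρ.norm_sub_le z ⟨hAx.trans hxz, hzB⟩
  have hmatched := (hρ.mono hAx hzB).frechetDist_subcurve_le hxz
  have htriangle : frechetDist (seg (P x) (P z)) (subcurve P x z) ≤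
      frechetDist (seg (P x) (P z)) (subcurve (seg a b) (ρ x) (ρ z)) +
        frechetDist (subcurve (seg a b) (ρ x) (ρ z)) (subcurve P x z) := by
    refine frechetDist_triangle (continuous_seg _ _).continuousOn ?_
      (continuousOn_subcurve (hP.mono (Icc_subset_Icc hAx hzB)) hxz)
    exact subcurve_seg a b _ _ ▸ (continuous_seg _ _).continuousOn
  linarith

lemma frechetDist_polyline_comp_seg_le {n : ℕ} {w : Fin (n + 1) → ℝ} {u v : Pt d} {c : ℝ}
    (hP : ContinuousOn P (Icc A B)) (hAB : A < B) (hw : Monotone w) (h0 : w 0 = A)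
    (h1 : w (Fin.last n) = B) (hu : ‖a - u‖ ≤ c) (hv : ‖b - v‖ ≤ c) :
    frechetDist (polyline (P ∘ w)) (seg u v) ≤
      frechetDist (seg a b) (subcurve P A B) + c := by
  refine le_of_forall_pos_le_add fun ε hε => ?_
  obtain ⟨ρ, hρ, hρA, hρB⟩ := exists_isMatching_of_frechetDist_lt
    (continuous_seg a b).continuousOn hP hAB (lt_add_of_pos_right _ hε)
  have hmem : ∀ k, w k ∈ Icc A B := fun k =>
    ⟨h0 ▸ hw (Fin.zero_le k), h1 ▸ hw (Fin.le_last k)⟩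
  have hρmono : MonotoneOn ρ (Icc A B) := hρ.strictMonoOn.monotoneOn
  refine frechetDist_polyline_seg_le (r := ρ ∘ w)
    (fun k l hkl => hρmono (hmem k) (hmem l) (hw hkl)) (by simp [h0, hρA]) (by simp [h1, hρB])
    fun k => ?_
  have hρk : ρ (w k) ∈ Icc (0 : ℝ) 1 := by
    simpa only [hρA, hρB] using hρmono.image_Icc_subset (mem_image_of_mem ρ (hmem k))
  have hPρ : ‖P (w k) - seg a b (ρ (w k))‖ ≤ frechetDist (seg a b) (subcurve P A B) + ε := by
    rw [norm_sub_rev]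
    exact hρ.norm_sub_le _ (hmem k)
  calc ‖P (w k) - seg u v (ρ (w k))‖
      ≤ ‖P (w k) - seg a b (ρ (w k))‖ + ‖seg a b (ρ (w k)) - seg u v (ρ (w k))‖ :=
        norm_sub_le_norm_sub_add_norm_sub _ _ _
    _ ≤ (frechetDist (seg a b) (subcurve P A B) + ε) + c :=
        add_le_add hPρ (norm_seg_sub_seg_le hρk hu hv)
    _ = frechetDist (seg a b) (subcurve P A B) + c + ε := by ring

lemma frechetDist_polyline_comp_seg_le_add_frechetDist {C D : ℝ} {n : ℕ} {w : Fin (n + 1) → ℝ}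
    (hP : ContinuousOn P (Icc A B)) (hAB : A < B) (hw : Monotone w) (h0 : w 0 = A)
    (h1 : w (Fin.last n) = B) (hP' : ContinuousOn P (Icc C D)) (hCD : C ≤ D) :
    frechetDist (polyline (P ∘ w)) (seg (P C) (P D)) ≤
      frechetDist (seg a b) (subcurve P A B) + frechetDist (seg a b) (subcurve P C D) := by
  have hseg := (continuous_seg a b).continuousOn (s := Icc 0 1)
  have hsub := continuousOn_subcurve hP' hCD
  refine frechetDist_polyline_comp_seg_le hP hAB hw h0 h1 ?_ ?_
  · simpa only [seg_zero, subcurve_zero] using norm_apply_zero_sub_le_frechetDist hseg hsub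
  · simpa only [seg_one, subcurve_one] using norm_apply_one_sub_le_frechetDist hseg hsub

end simplification

/-! ### Breakpoints and the set systems -/

section breakpoints

variable {d : ℕ} {P : ℝ → Pt d} {a b : Pt d} {m : ℕ} {t : ℕ → ℝ} {x y : ℕ}

lemma continuousOn_Icc_breakpoints (ht : MonotoneOn t (Icc 1 m))
    (hP : ContinuousOn P (Icc (t 1) (t m))) (hx : 1 ≤ x) (hxy : x ≤ y) (hym : y ≤ m) :
    ContinuousOn P (Icc (t x) (t y)) :=
  hP.mono <| Icc_subset_Icc
    (ht ⟨le_rfl, by omega⟩ ⟨hx, by omega⟩ hx)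
    (ht ⟨by omega, hym⟩ ⟨by omega, le_rfl⟩ hym)

lemma frechetDist_seg_subcurve_breakpoints_le (ht : StrictMonoOn t (Icc 1 m))
    (hP : ContinuousOn P (Icc (t 1) (t m))) (hx : 1 ≤ x) (hxy : x < y) (hym : y ≤ m) {p q : ℕ}
    (hxp : x ≤ p) (hpq : p ≤ q) (hqy : q ≤ y) :
    frechetDist (seg (P (t p)) (P (t q))) (subcurve P (t p) (t q)) ≤
      2 * frechetDist (seg a b) (subcurve P (t x) (t y)) := by
  have hmem : ∀ k, x ≤ k → k ≤ y → k ∈ Icc 1 m := fun k hxk hky =>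
    ⟨hx.trans hxk, hky.trans hym⟩
  have hxm := hmem x le_rfl hxy.le
  have hym' := hmem y hxy.le le_rfl
  have hpm := hmem p hxp (hpq.trans hqy)
  have hqm := hmem q (hxp.trans hpq) hqy
  exact frechetDist_seg_subcurve_le (continuousOn_Icc_breakpoints ht.monotoneOn hP hx hxy.le hym)
    (ht hxm hym' hxy) (ht.monotoneOn hxm hpm hxp) (ht.monotoneOn hpm hqm hpq)
    (ht.monotoneOn hqm hym' hqy)

lemma frechetDist_polyline_breakpoints_seg_le {n : ℕ} {S : Fin (n + 1) → ℕ}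
    (ht : StrictMonoOn t (Icc 1 m)) (hP : ContinuousOn P (Icc (t 1) (t m))) (hS : Monotone S)
    (hS0 : 1 ≤ S 0) (hS' : S 0 < S (Fin.last n)) (hSm : S (Fin.last n) ≤ m) {i j : ℕ}
    (hi : 1 ≤ i) (hij : i < j) (hjm : j ≤ m) :
    frechetDist (polyline (P ∘ t ∘ S)) (seg (P (t i)) (P (t j))) ≤
      frechetDist (seg a b) (subcurve P (t (S 0)) (t (S (Fin.last n)))) +
        frechetDist (seg a b) (subcurve P (t i) (t j)) := by
  have hmem : ∀ k, S k ∈ Icc 1 m := fun k =>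
    ⟨hS0.trans (hS (Fin.zero_le k)), (hS (Fin.le_last k)).trans hSm⟩
  exact frechetDist_polyline_comp_seg_le_add_frechetDist
    (continuousOn_Icc_breakpoints ht.monotoneOn hP hS0 hS'.le hSm) (ht (hmem _) (hmem _) hS')
    (fun k l hkl => ht.monotoneOn (hmem k) (hmem l) (hS hkl)) rfl rfl
    (continuousOn_Icc_breakpoints ht.monotoneOn hP hi hij.le hjm)
    (ht ⟨hi, hij.le.trans hjm⟩ ⟨hi.trans hij.le, hjm⟩ hij).le

theorem rSet_seg_subset_rTilde2 (ht : StrictMonoOn t (Icc 1 m))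
    (hP : ContinuousOn P (Icc (t 1) (t m))) {Δ D : ℝ} (hD : 2 * Δ ≤ D) {xz yz : ℕ → ℕ}
    (hleft : ∀ z x, 1 ≤ x → x ≤ z → z < m →
      (∀ x', x ≤ x' → x' ≤ z →
        frechetDist (seg (P (t x')) (P (t z))) (subcurve P (t x') (t z)) ≤ D) → xz z ≤ x)
    (hright : ∀ z y, 1 ≤ z → z + 1 ≤ y → y ≤ m →
      (∀ y', z + 1 ≤ y' → y' ≤ y →
        frechetDist (seg (P (t (z + 1))) (P (t y'))) (subcurve P (t (z + 1)) (t y')) ≤ D) →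
      y ≤ yz z)
    {i j : ℕ} (hi : 1 ≤ i) (hij : i < j) (hjm : j ≤ m)
    (hdist : frechetDist (seg a b) (subcurve P (t i) (t j)) ≤ Δ) :
    rSet P m t Δ (seg a b) ⊆ rTilde2 P m t Δ xz yz i j := by
  rintro z ⟨hz, hzm, x, y, hx, hxz, hzy, hym, hxy⟩
  have hshortcut : ∀ p q, x ≤ p → p ≤ q → q ≤ y →
      frechetDist (seg (P (t p)) (P (t q))) (subcurve P (t p) (t q)) ≤ D :=
    fun p q hxp hpq hqy =>
      calc _ ≤ 2 * frechetDist (seg a b) (subcurve P (t x) (t y)) :=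
            frechetDist_seg_subcurve_breakpoints_le ht hP hx (hxz.trans_lt hzy) hym hxp hpq hqy
        _ ≤ 2 * Δ := mul_le_mul_of_nonneg_left hxy zero_le_two
        _ ≤ D := hD
  refine ⟨hz, hzm, x, y, hleft z x hx hxz hzm fun p hxp hpz => ?_, hxz, hzy,
    hright z y hz hzy hym fun q hzq hqy => ?_, ?_⟩
  · exact hshortcut p z hxp hpz hzy.le
  · exact hshortcut (z + 1) q (hxz.trans z.le_succ) hzq hqy
  have hS : Monotone ![x, z, z + 1, y] := by
    simpa [monotone_vecCons] using ⟨hxz, hzy⟩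
  have hπ : ![P (t x), P (t z), P (t (z + 1)), P (t y)] = P ∘ t ∘ ![x, z, z + 1, y] := by
    ext1 k
    fin_cases k <;> rfl
  calc frechetDist (polyline ![P (t x), P (t z), P (t (z + 1)), P (t y)])
        (seg (P (t i)) (P (t j)))
      ≤ frechetDist (seg a b) (subcurve P (t x) (t y)) +
          frechetDist (seg a b) (subcurve P (t i) (t j)) := by
        rw [hπ]
        exact frechetDist_polyline_breakpoints_seg_le ht hP hS hx (hxz.trans_lt hzy) hym hi hij
          hjm
    _ ≤ Δ + Δ := add_le_add hxy hdist
    _ = 2 * Δ := (two_mul Δ).symm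

end breakpoints

/-- (`ℓ = 2`) For every `Q ∈ 𝕏^d_2` there are indices `1 ≤ i < j ≤ m`
with `r_Q ⊆ r_{i,j} ∈ R̃₂`; consequently a set cover of `R` of size `k` yields a set
cover of `R̃₂` of size at most `k`. -/
theorem stmt8 {d : ℕ} (P : ℝ → Pt d) (hP : ContinuousOn P (Icc 0 1))
    (m : ℕ) (hm : 2 ≤ m) (t : ℕ → ℝ) (ht0 : t 1 = 0) (ht1 : t m = 1)
    (htmono : ∀ i, 1 ≤ i → i < m → t i < t (i + 1))
    (Δ : ℝ) (hΔ : 0 < Δ) (xz yz : ℕ → ℕ)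
    (hxz : ∀ z, 1 ≤ z → z < m →
      IsLeast {x | 1 ≤ x ∧ x ≤ z ∧ ∀ x', x ≤ x' → x' ≤ z →
        frechetDist (seg (P (t x')) (P (t z))) (subcurve P (t x') (t z)) ≤ 4 * Δ} (xz z))
    (hyz : ∀ z, 1 ≤ z → z < m →
      IsGreatest {y | z + 1 ≤ y ∧ y ≤ m ∧ ∀ y', z + 1 ≤ y' → y' ≤ y →
        frechetDist (seg (P (t (z+1))) (P (t y'))) (subcurve P (t (z+1)) (t y')) ≤ 4 * Δ}
        (yz z)) :
    (∀ Q, IsPolygonal Q 2 → ∃ i j, 1 ≤ i ∧ i < j ∧ j ≤ m ∧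
      rSet P m t Δ Q ⊆ rTilde2 P m t Δ xz yz i j) ∧
    ∀ (k : ℕ) (Qc : Fin k → ℝ → Pt d), (∀ s, IsPolygonal (Qc s) 2) →
      (∀ z, 1 ≤ z → z < m → ∃ s, z ∈ rSet P m t Δ (Qc s)) →
      ∃ ij : Fin k → ℕ × ℕ,
        (∀ s, 1 ≤ (ij s).1 ∧ (ij s).1 < (ij s).2 ∧ (ij s).2 ≤ m) ∧
        ∀ z, 1 ≤ z → z < m → ∃ s, z ∈ rTilde2 P m t Δ xz yz (ij s).1 (ij s).2 := by
  have ht : StrictMonoOn t (Icc 1 m) := strictMonoOn_of_lt_add_one ordConnected_Icc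
    fun i _ hi hi' => htmono i hi.1 (Nat.lt_of_succ_le hi'.2)
  have hP' : ContinuousOn P (Icc (t 1) (t m)) := by rwa [ht0, ht1]
  have hsub : ∀ Q, IsPolygonal Q 2 → ∃ i j, 1 ≤ i ∧ i < j ∧ j ≤ m ∧
      rSet P m t Δ Q ⊆ rTilde2 P m t Δ xz yz i j := by
    intro Q hQ
    obtain ⟨a, b, rfl⟩ := hQ.exists_eq_seg
    rcases (rSet P m t Δ (seg a b)).eq_empty_or_nonempty with hempty |
      ⟨_, _, _, i, j, hi, hiz, hzj, hjm, hdist⟩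
    · exact ⟨1, 2, le_rfl, one_lt_two, hm, hempty ▸ empty_subset _⟩
    exact ⟨i, j, hi, hiz.trans_lt hzj, hjm, rSet_seg_subset_rTilde2 ht hP' (by linarith)
      (fun z x hx hxz' hzm hle => (hxz z (hx.trans hxz') hzm).2 ⟨hx, hxz', hle⟩)
      (fun z y hz hzy hym hle => (hyz z hz (hzy.trans hym)).2 ⟨hzy, hym, hle⟩)
      hi (hiz.trans_lt hzj) hjm hdist⟩
  refine ⟨hsub, fun k Qc hQc hcov => ?_⟩
  choose i j hi hij hjm hsubset using fun s => hsub (Qc s) (hQc s)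
  exact ⟨fun s => (i s, j s), fun s => ⟨hi s, hij s, hjm s⟩,
    fun z hz hzm => (hcov z hz hzm).imp fun s hzs => hsubset s hzs⟩
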